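/- arXiv:1401.8050 — 3 statements merged into one kernel-verified Lean document; each statement's English description precedes it below -/
import Mathlib

section
/- Let m ≥ 2 and 1 ≤ k ≤ m−1, and let A and B be invertible m×m matrices over ℂ. If every k×k minor of A equals the corresponding k×k minor of B, i.e. det(A.submatrix S T) = det(B.submatrix S T) for all strictly monotone maps S, T : Fin k → Fin m, then there exists a nonzero scalar λ ∈ ℂ such that A = λ • B. -/
open Matrix

namespace Matrix

variable {R ι : Type*} [CommRing R] {m k n : ℕ}

/-- Equality of all minors indexed by strictly monotone maps extends to arbitrary index maps. -/
lemma det_submatrix_eq_of_forall_strictMono {A B : Matrix (Fin m) (Fin m) R}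
    (h : ∀ S T : Fin k → Fin m, StrictMono S → StrictMono T →
      (A.submatrix S T).det = (B.submatrix S T).det) (S T : Fin k → Fin m) :
    (A.submatrix S T).det = (B.submatrix S T).det := by
  by_cases hS : Function.Injective S
  · by_cases hT : Function.Injective T
    · have hST := h (S ∘ Tuple.sort S) (T ∘ Tuple.sort T)
        ((Tuple.monotone_sort S).strictMono_of_injective (hS.comp (Tuple.sort S).injective))
        ((Tuple.monotone_sort T).strictMono_of_injective (hT.comp (Tuple.sort T).injective))
      have sort_det (M : Matrix (Fin m) (Fin m) R) :
          (M.submatrix (S ∘ Tuple.sort S) (T ∘ Tuple.sort T)).det =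
            ((Tuple.sort S).sign : R) * (((Tuple.sort T).sign : R) * (M.submatrix S T).det) := by
        rw [← det_permute', ← det_permute, submatrix_submatrix, submatrix_submatrix]
        rfl
      rw [sort_det, sort_det] at hST
      have unit_sign (σ : Equiv.Perm (Fin k)) : IsUnit ((σ.sign : ℤ) : R) :=
        σ.sign.isUnit.map (Int.castRingHom R)
      exact (unit_sign _).mul_left_cancel ((unit_sign _).mul_left_cancel hST)
    · obtain ⟨a, b, hab, hne⟩ : ∃ a b, T a = T b ∧ a ≠ b := by
        simpa [Function.Injective] using hT
      rw [det_zero_of_column_eq hne (by simp [hab]), det_zero_of_column_eq hne (by simp [hab])]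
  · obtain ⟨a, b, hab, hne⟩ : ∃ a b, S a = S b ∧ a ≠ b := by
      simpa [Function.Injective] using hS
    rw [det_zero_of_row_eq hne (by ext; simp [hab]), det_zero_of_row_eq hne (by ext; simp [hab])]

/-- Expansion of a minor of a product in terms of the minors of the right factor. -/
lemma det_submatrix_mul [Fintype ι] (P A : Matrix ι ι R) (S T : Fin k → ι) :
    ((P * A).submatrix S T).det =
      ∑ f : Fin k → ι, (∏ i, P (S i) (f i)) * (A.submatrix f T).det := by
  classical
  have hrow : (P * A).submatrix S T = fun i => ∑ l, P (S i) l • fun j => A l (T j) := by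
    ext i j
    simp [mul_apply, Finset.sum_apply]
  rw [hrow]
  change (detRowAlternating (R := R) (n := Fin k)).toMultilinearMap _ = _
  rw [MultilinearMap.map_sum]
  refine Finset.sum_congr rfl fun f _ => ?_
  rw [MultilinearMap.map_smul_univ]
  rfl

/-- An injective tuple avoiding two given indices. -/
lemma exists_injective_avoiding (hn : n + 2 ≤ m) (i j : Fin m) :
    ∃ U : Fin n → Fin m, Function.Injective U ∧ (∀ a, U a ≠ i) ∧ ∀ a, U a ≠ j := by
  have hcard : Fintype.card (Fin n) ≤ Fintype.card (({i, j}ᶜ : Finset (Fin m))) := by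
    rw [Fintype.card_fin, Fintype.card_coe, Finset.card_compl, Fintype.card_fin]
    have := Finset.card_le_two (a := i) (b := j)
    omega
  obtain ⟨e⟩ := Function.Embedding.nonempty_of_card_le hcard
  have he (a : Fin n) : (e a : Fin m) ≠ i ∧ (e a : Fin m) ≠ j := by
    simpa using (e a).2
  exact ⟨fun a => e a, Subtype.val_injective.comp e.injective,
    fun a => (he a).1, fun a => (he a).2⟩

/-- If the minors of `C` are those of the identity, then the off-diagonal entries vanish. -/
lemma apply_eq_zero_of_minors_eq_one {C : Matrix (Fin m) (Fin m) R} (hn : n + 2 ≤ m)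
    (hC : ∀ S T : Fin (n + 1) → Fin m,
      (C.submatrix S T).det = ((1 : Matrix (Fin m) (Fin m) R).submatrix S T).det)
    {i j : Fin m} (hij : i ≠ j) : C i j = 0 := by
  obtain ⟨U, hU, hUi, hUj⟩ := exists_injective_avoiding hn i j
  set T : Fin (n + 1) → Fin m := Fin.cons j U with hT
  have hTinj : Function.Injective T :=
    Fin.cons_injective_iff.2 ⟨by rintro ⟨a, ha⟩; exact hUj a ha, hU⟩
  have hTi (a) : T a ≠ i := by
    cases a using Fin.cases with
    | zero => simpa [hT] using hij.symm
    | succ a => simpa [hT] using hUi a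
  -- Expand a determinant with a repeated column along that column.
  set M := C.submatrix (Fin.cons i T : Fin (n + 2) → Fin m) (Fin.cons j T) with hM
  have hdet : M.det = 0 := det_zero_of_column_eq (i := 0) (j := Fin.succ 0)
    (Fin.succ_ne_zero 0).symm fun _ => rfl
  have hminor (r : Fin (n + 2)) : (M.submatrix r.succAbove Fin.succ).det =
      ((1 : Matrix (Fin m) (Fin m) R).submatrix
        ((Fin.cons i T : Fin (n + 2) → Fin m) ∘ r.succAbove) T).det := by
    rw [← hC, hM, submatrix_submatrix]
    rfl
  rw [det_succ_column_zero, Fin.sum_univ_succ, Finset.sum_eq_zero, hminor] at hdet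
  · have hcomp : (Fin.cons i T : Fin (n + 2) → Fin m) ∘ (0 : Fin (n + 2)).succAbove = T := by
      ext a
      simp
    simpa [hcomp, submatrix_one T hTinj, hM] using hdet
  · intro r _
    rw [hminor, det_eq_zero_of_row_eq_zero 0, mul_zero]
    intro b
    simp [(hTi b).symm]

/-- If the minors of `C` are those of the identity, then each diagonal entry is invertible, and
all of them coincide. -/
lemma isUnit_and_diag_eq_of_minors_eq_one {C : Matrix (Fin m) (Fin m) R} (hn : n + 2 ≤ m)
    (hC : ∀ S T : Fin (n + 1) → Fin m,
      (C.submatrix S T).det = ((1 : Matrix (Fin m) (Fin m) R).submatrix S T).det)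
    (i j : Fin m) : IsUnit (C i i) ∧ C i i = C j j := by
  obtain ⟨U, hU, hUi, hUj⟩ := exists_injective_avoiding hn i j
  have hprod (l : Fin m) (hUl : ∀ a, U a ≠ l) : C l l * ∏ a, C (U a) (U a) = 1 := by
    let T : Fin (n + 1) → Fin m := Fin.cons l U
    have hinj : Function.Injective T :=
      Fin.cons_injective_iff.2 ⟨by rintro ⟨a, ha⟩; exact hUl a ha, hU⟩
    have hdiag : C.submatrix T T = diagonal fun a => C (T a) (T a) := by
      ext a b
      by_cases hab : a = b
      · simp [hab]
      · rw [diagonal_apply_ne _ hab]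
        exact apply_eq_zero_of_minors_eq_one hn hC (hinj.ne hab)
    have hdet := hC T T
    rwa [submatrix_one _ hinj, det_one, hdiag, det_diagonal, Fin.prod_univ_succ] at hdet
  have hi := hprod i hUi
  exact ⟨IsUnit.of_mul_eq_one _ hi,
    (IsUnit.of_mul_eq_one_right _ hi).mul_right_cancel (hi.trans (hprod j hUj).symm)⟩

end Matrix

/-- If two invertible `m × m` complex matrices (`m ≥ 2`) have all equal
`k × k` minors for some `1 ≤ k ≤ m - 1`, then they agree up to a nonzero
scalar. -/
theorem eq_smul_of_forall_minor_eq (m k : ℕ) (hm : 2 ≤ m)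
    (hk1 : 1 ≤ k) (hkm : k ≤ m - 1)
    (A B : Matrix (Fin m) (Fin m) ℂ)
    (hA : IsUnit A.det) (hB : IsUnit B.det)
    (h : ∀ S T : Fin k → Fin m, StrictMono S → StrictMono T →
      (A.submatrix S T).det = (B.submatrix S T).det) :
    ∃ c : ℂ, c ≠ 0 ∧ A = c • B := by
  obtain ⟨n, rfl⟩ : ∃ n, k = n + 1 := ⟨k - 1, by omega⟩
  have hn : n + 2 ≤ m := by omega
  have hC (S T : Fin (n + 1) → Fin m) : ((B⁻¹ * A).submatrix S T).det =
      ((1 : Matrix (Fin m) (Fin m) ℂ).submatrix S T).det := by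
    rw [← nonsing_inv_mul B hB, det_submatrix_mul, det_submatrix_mul]
    simp only [det_submatrix_eq_of_forall_strictMono h]
  set C := B⁻¹ * A with hCdef
  let o : Fin m := ⟨0, by omega⟩
  have hscalar : C = C o o • (1 : Matrix (Fin m) (Fin m) ℂ) := by
    ext i j
    by_cases hij : i = j
    · subst hij
      simpa using (isUnit_and_diag_eq_of_minors_eq_one hn hC i o).2
    · simpa [hij] using apply_eq_zero_of_minors_eq_one hn hC hij
  refine ⟨C o o, (isUnit_and_diag_eq_of_minors_eq_one hn hC o o).1.ne_zero, ?_⟩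
  calc A = B * C := (mul_nonsing_inv_cancel_left B A hB).symm
    _ = B * (C o o • (1 : Matrix (Fin m) (Fin m) ℂ)) := congrArg (B * ·) hscalar
    _ = C o o • B := by simp
end

section
/- Let Q and Q' be invertible symmetric 4×4 matrices over ℂ. Suppose that for all a, b ∈ ℂ⁴, one has (aᵀQb)² = (aᵀQa)(bᵀQb) if and only if (aᵀQ'b)² = (aᵀQ'a)(bᵀQ'b). Then there exists a nonzero scalar λ ∈ ℂ such that Q' = λ • Q. -/
open Matrix

namespace LinearMap.BilinForm

open Module
open LinearMap (BilinForm)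

variable {K V : Type*} [Field K] [AddCommGroup V] [Module K V]

/-- In dimension at least four, the discriminant form `b ↦ (B a a) (B b b) - (B a b) ^ 2` of a
nondegenerate symmetric form at an anisotropic vector does not vanish on any hyperplane. -/
theorem exists_sq_ne_mul_of_ker [NeZero (2 : K)] {B : BilinForm K V}
    (hV : 3 < finrank K V) (hB : B.IsSymm) (hn : B.Nondegenerate) {a : V} (ha : B a a ≠ 0)
    (l : V →ₗ[K] K) : ∃ b, l b = 0 ∧ B a b ^ 2 ≠ B a a * B b b := by
  by_contra! H
  have hpolar : ∀ x y, l x = 0 → l y = 0 → B a a * B x y = B a x * B a y := by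
    intro x y hx hy
    have hxy := H (x + y) (by simp [hx, hy])
    simp only [map_add, LinearMap.add_apply, hB.eq y x] at hxy
    refine mul_left_cancel₀ (two_ne_zero (α := K)) ?_
    linear_combination H x hx + H y hy - hxy
  obtain ⟨u, hu⟩ : ∃ u, ∀ x, ∃ t : K, l (x - t • u) = 0 := by
    by_cases hl : ∃ u, l u ≠ 0
    · obtain ⟨u, hu⟩ := hl
      exact ⟨u, fun x => ⟨l x / l u, by simp [hu]⟩⟩
    · push Not at hl
      exact ⟨0, fun x => ⟨0, hl _⟩⟩
  have : FiniteDimensional K V := FiniteDimensional.of_finrank_pos (by omega)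
  have hker : LinearMap.ker (l.prod ((B a).prod (B u))) ≠ ⊥ :=
    LinearMap.ker_ne_bot_of_finrank_lt (by simpa using hV)
  obtain ⟨b, hb, hb0⟩ := Submodule.exists_mem_ne_zero_of_ne_bot hker
  simp only [LinearMap.mem_ker, LinearMap.prod_apply, Function.prod_apply, Prod.mk_eq_zero] at hb
  obtain ⟨hlb, hab, hub⟩ := hb
  refine hb0 (hn.1 b fun x => ?_)
  obtain ⟨t, ht⟩ := hu x
  have hx := hpolar b _ hlb ht
  rw [hab, zero_mul, mul_eq_zero, or_iff_right ha] at hx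
  simpa [hB.eq b u, hub] using hx

/-- Over an algebraically closed field, every vector is a sum of two isotropic vectors. -/
theorem exists_isotropic_add_eq [NeZero (2 : K)] [IsAlgClosed K] {B : BilinForm K V}
    (hV : 3 < finrank K V) (hB : B.IsSymm) (hn : B.Nondegenerate) (v : V) :
    ∃ x y, B x x = 0 ∧ B y y = 0 ∧ x + y = v := by
  by_cases hv : B v v = 0
  · exact ⟨v, 0, hv, by simp, by simp⟩
  obtain ⟨w, hvw, hw⟩ := exists_sq_ne_mul_of_ker hV hB hn hv (B v)
  have hww : B w w ≠ 0 := by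
    rintro h0
    simp [hvw, h0] at hw
  obtain ⟨s, hs⟩ := IsAlgClosed.exists_eq_mul_self (-B v v / B w w)
  have hs' : s * s * B w w = -B v v := by rw [← hs]; field_simp
  have h2 : (2 : K) ≠ 0 := two_ne_zero
  refine ⟨(2⁻¹ : K) • (v + s • w), (2⁻¹ : K) • (v - s • w), ?_, ?_, ?_⟩
  · simp only [map_add, map_smul, LinearMap.add_apply, LinearMap.smul_apply, smul_eq_mul,
      hB.eq w v, hvw]
    linear_combination (2⁻¹ * 2⁻¹ : K) * hs'
  · simp only [map_sub, map_smul, LinearMap.sub_apply, LinearMap.smul_apply, smul_eq_mul,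
      hB.eq w v, hvw]
    linear_combination (2⁻¹ * 2⁻¹ : K) * hs'
  · rw [← smul_add, add_add_sub_cancel, ← two_smul K v, smul_smul, inv_mul_cancel₀ h2, one_smul]

/-- If every line tangent to `B` is tangent to `B'`, every `B`-isotropic vector is
`B'`-isotropic. -/
theorem isotropic_of_tangent_imp [NeZero (2 : K)] {B B' : BilinForm K V}
    (hV : 3 < finrank K V) (hB' : B'.IsSymm) (hn' : B'.Nondegenerate)
    (h : ∀ a b, B a b ^ 2 = B a a * B b b → B' a b ^ 2 = B' a a * B' b b)
    {a : V} (ha : B a a = 0) : B' a a = 0 := by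
  by_contra ha'
  obtain ⟨b, hb, hne⟩ := exists_sq_ne_mul_of_ker hV hB' hn' ha' (B a)
  exact hne (h a b (by simp [ha, hb]))

/-- If every line tangent to `B` is tangent to `B'`, the polar functionals of a `B`-isotropic
vector with respect to `B` and `B'` are proportional. -/
theorem exists_apply_eq_smul_of_tangent_imp [NeZero (2 : K)] {B B' : BilinForm K V}
    (hV : 3 < finrank K V) (hB' : B'.IsSymm) (hn' : B'.Nondegenerate)
    (h : ∀ a b, B a b ^ 2 = B a a * B b b → B' a b ^ 2 = B' a a * B' b b)
    {a : V} (ha : B a a = 0) : ∃ c : K, B' a = c • B a := by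
  have ha' := isotropic_of_tangent_imp hV hB' hn' h ha
  have hker : ⨅ _ : Unit, LinearMap.ker (B a) ≤ LinearMap.ker (B' a) := by
    intro b hb
    have hb0 : B a b = 0 := by simpa using hb
    simpa [ha'] using h a b (by simp [ha, hb0])
  have hspan := mem_span_of_iInf_ker_le_ker hker
  rw [Set.range_const, Submodule.mem_span_singleton] at hspan
  obtain ⟨c, hc⟩ := hspan
  exact ⟨c, hc.symm⟩

/-- Nondegenerate symmetric forms on a space of dimension at least four over an algebraically
closed field are proportional as soon as every line tangent to the first is tangent to the
second. -/
theorem exists_eq_smul_of_tangent_imp [NeZero (2 : K)] [IsAlgClosed K] {B B' : BilinForm K V}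
    (hV : 3 < finrank K V) (hB : B.IsSymm) (hn : B.Nondegenerate)
    (hB' : B'.IsSymm) (hn' : B'.Nondegenerate)
    (h : ∀ a b, B a b ^ 2 = B a a * B b b → B' a b ^ 2 = B' a a * B' b b) :
    ∃ c : K, c ≠ 0 ∧ B' = c • B := by
  have : Nontrivial V := nontrivial_of_finrank_pos (R := K) (by omega)
  obtain ⟨a, ha, ha0⟩ : ∃ a, B a a = 0 ∧ a ≠ 0 := by
    by_contra! H
    obtain ⟨v, hv⟩ := exists_ne (0 : V)
    obtain ⟨x, y, hx, hy, rfl⟩ := exists_isotropic_add_eq hV hB hn v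
    simp [H x hx, H y hy] at hv
  obtain ⟨c, hc⟩ := exists_apply_eq_smul_of_tangent_imp hV hB' hn' h ha
  have hiso : ∀ b, B b b = 0 → B' b = c • B b := by
    intro b hb
    obtain ⟨d, hd⟩ := exists_apply_eq_smul_of_tangent_imp hV hB' hn' h hb
    by_cases hab : B a b = 0
    · obtain ⟨e, he⟩ := exists_apply_eq_smul_of_tangent_imp hV hB' hn' h (a := a + b)
        (by simp [ha, hb, hab, hB.eq b a])
      have hlin : (c - e) • a + (d - e) • b = 0 := by
        refine hn.1 _ fun x => ?_
        have hx := LinearMap.congr_fun he x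
        simp only [map_add, hc, hd, LinearMap.add_apply, LinearMap.smul_apply, smul_eq_mul] at hx
        simp only [map_add, map_smul, LinearMap.add_apply, LinearMap.smul_apply, smul_eq_mul]
        linear_combination hx
      by_cases hde : d = e
      · have hce : c = e := by simpa [hde, ha0, sub_eq_zero] using hlin
        rw [hd, hde, hce]
      · have hb : b = (-(d - e)⁻¹ * (c - e)) • a := by
          rw [mul_smul, eq_neg_of_add_eq_zero_left hlin, smul_neg, neg_smul, neg_neg, smul_smul,
            inv_mul_cancel₀ (sub_ne_zero.2 hde), one_smul]
        rw [hb, map_smul, map_smul, hc, smul_comm]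
    · have hcd : c * B a b = d * B a b := by
        have h1 := LinearMap.congr_fun hc b
        have h2 := LinearMap.congr_fun hd a
        rw [LinearMap.smul_apply, smul_eq_mul] at h1 h2
        rw [← h1, hB'.eq, h2, hB.eq]
      rw [hd, mul_right_cancel₀ hab hcd]
  have heq : B' = c • B := by
    ext1 v
    obtain ⟨x, y, hx, hy, rfl⟩ := exists_isotropic_add_eq hV hB hn v
    simp [hiso x hx, hiso y hy]
  refine ⟨c, ?_, heq⟩
  rintro rfl
  exact hn'.ne_zero (by simpa using heq)

end LinearMap.BilinForm

/-- Two invertible symmetric `4 × 4` complex matrices with the same tangent-line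
complex (the same set of tangent lines, expressed by the discriminant condition
`(aᵀQb)² = (aᵀQa)(bᵀQb)`) agree up to a nonzero scalar. -/
theorem eq_smul_of_same_tangent_lines (Q Q' : Matrix (Fin 4) (Fin 4) ℂ)
    (hQ : Q.IsSymm) (hQ' : Q'.IsSymm)
    (hQu : IsUnit Q.det) (hQ'u : IsUnit Q'.det)
    (h : ∀ a b : Fin 4 → ℂ,
      (a ⬝ᵥ (Q *ᵥ b)) ^ 2 = (a ⬝ᵥ (Q *ᵥ a)) * (b ⬝ᵥ (Q *ᵥ b)) ↔
      (a ⬝ᵥ (Q' *ᵥ b)) ^ 2 = (a ⬝ᵥ (Q' *ᵥ a)) * (b ⬝ᵥ (Q' *ᵥ b))) :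
    ∃ c : ℂ, c ≠ 0 ∧ Q' = c • Q := by
  obtain ⟨c, hc, heq⟩ := LinearMap.BilinForm.exists_eq_smul_of_tangent_imp
    (B := Q.toBilin') (B' := Q'.toBilin') (by simp)
    (Matrix.isSymm_toBilin'_iff_isSymm.2 hQ)
    (LinearMap.BilinForm.nondegenerate_toBilin'_of_det_ne_zero' Q hQu.ne_zero)
    (Matrix.isSymm_toBilin'_iff_isSymm.2 hQ')
    (LinearMap.BilinForm.nondegenerate_toBilin'_of_det_ne_zero' Q' hQ'u.ne_zero)
    (fun a b => by simpa only [Matrix.toBilin'_apply'] using (h a b).1)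
  exact ⟨c, hc, Matrix.toBilin'.injective (by rw [heq, map_smul])⟩
end

section
/- Let Q and Q' be invertible symmetric 4×4 matrices over ℂ. Suppose that for every 2-dimensional linear subspace W ⊆ ℂ⁴, one has (yᵀQy = 0 for all y ∈ W) if and only if (yᵀQ'y = 0 for all y ∈ W). Then there exists a nonzero scalar λ ∈ ℂ such that Q' = λ • Q. -/
open Matrix

theorem Matrix.mulVec_dotProduct_mulVec_mulVec {n R : Type*} [Fintype n] [CommSemiring R]
    (P A : Matrix n n R) (x : n → R) :
    (P *ᵥ x) ⬝ᵥ (A *ᵥ (P *ᵥ x)) = x ⬝ᵥ ((Pᵀ * A * P) *ᵥ x) := by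
  rw [Matrix.mul_assoc, ← mulVec_mulVec, ← mulVec_mulVec, dotProduct_mulVec x, vecMul_transpose]

theorem Matrix.IsSymm.transpose_mul_mul_self {n R : Type*} [Fintype n] [CommSemiring R]
    {A : Matrix n n R} (hA : A.IsSymm) (P : Matrix n n R) : (Pᵀ * A * P).IsSymm := by
  rw [IsSymm, transpose_mul, transpose_mul, hA.eq, transpose_transpose, Matrix.mul_assoc]

/-- A symmetric matrix over `ℂ` is determined by its quadratic form. -/
theorem Matrix.IsSymm.eq_of_dotProduct_mulVec_eq {n : Type*} [Fintype n] [DecidableEq n]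
    {A B : Matrix n n ℂ} (hA : A.IsSymm) (hB : B.IsSymm)
    (h : ∀ x : n → ℂ, x ⬝ᵥ (A *ᵥ x) = x ⬝ᵥ (B *ᵥ x)) : A = B := by
  ext i j
  have hi := h (Pi.single i 1)
  have hj := h (Pi.single j 1)
  have hij := h (Pi.single i 1 + Pi.single j 1)
  have hA' := hA.apply i j
  have hB' := hB.apply i j
  simp only [mulVec_add, dotProduct_add, add_dotProduct, mulVec_single_one,
    single_one_dotProduct, col_apply] at hi hj hij
  linear_combination (hij - hi - hj + hA' * (-1) + hB') / 2

theorem Matrix.IsSymm.separatingLeft_associated_toQuadraticForm' {n : Type*} [Fintype n]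
    [DecidableEq n] {A : Matrix n n ℂ} (hA : A.IsSymm) (hdet : IsUnit A.det) :
    (QuadraticMap.associated (R := ℂ) A.toQuadraticForm').SeparatingLeft := by
  have hsymm : ∀ x y : n → ℂ, toLinearMap₂' ℂ A x y = toLinearMap₂' ℂ A y x := by
    intro x y
    simp only [toLinearMap₂'_apply']
    rw [dotProduct_mulVec, ← mulVec_transpose, hA.eq, dotProduct_comm]
  rw [toQuadraticForm', QuadraticMap.associated_left_inverse ℂ hsymm]
  exact LinearMap.separatingLeft_toLinearMap₂'_of_det_ne_zero' hdet.ne_zero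

/-- An invertible symmetric matrix over `ℂ` is congruent to the identity. -/
theorem Matrix.IsSymm.exists_transpose_mul_mul_eq_one {n : Type*} [Fintype n] [DecidableEq n]
    {A : Matrix n n ℂ} (hA : A.IsSymm) (hdet : IsUnit A.det) :
    ∃ P : Matrix n n ℂ, Pᵀ * A * P = 1 := by
  obtain ⟨f⟩ := QuadraticForm.equivalent_of_isAlgClosed _ _
    ((isSymm_one (n := n) (α := ℂ)).separatingLeft_associated_toQuadraticForm' (by simp))
    (hA.separatingLeft_associated_toQuadraticForm' hdet)
  refine ⟨LinearMap.toMatrix' (f.toLinearEquiv : (n → ℂ) →ₗ[ℂ] n → ℂ), ?_⟩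
  refine IsSymm.eq_of_dotProduct_mulVec_eq ?_ isSymm_one fun x ↦ ?_
  · exact hA.transpose_mul_mul_self _
  · have hf := f.map_app x
    simp only [toQuadraticForm', LinearMap.BilinMap.toQuadraticMap_apply,
      toLinearMap₂'_apply'] at hf
    rw [← hf, ← mulVec_dotProduct_mulVec_mulVec, LinearMap.toMatrix'_mulVec]
    rfl

/-- If a symmetric form vanishes on the vectors `eᵢ + s eⱼ` with `s ^ 2 = -1`, its matrix is
scalar. -/
theorem Matrix.IsSymm.eq_smul_one_of_isotropic {n : Type*} [Fintype n] [DecidableEq n]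
    {A : Matrix n n ℂ} (hA : A.IsSymm) (k : n)
    (h : ∀ i j : n, i ≠ j → ∀ s : ℂ, s * s = -1 →
      (Pi.single i 1 + s • Pi.single j 1) ⬝ᵥ (A *ᵥ (Pi.single i 1 + s • Pi.single j 1)) = 0) :
    A = A k k • (1 : Matrix n n ℂ) := by
  have key : ∀ i j : n, i ≠ j → A i j = 0 ∧ A i i = A j j := by
    intro i j hij
    have hp := h i j hij Complex.I Complex.I_mul_I
    have hm := h i j hij (-Complex.I) (by simp)
    have hs := hA.apply i j
    simp only [mulVec_add, mulVec_smul, dotProduct_add, add_dotProduct, smul_dotProduct,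
      dotProduct_smul, mulVec_single_one, single_one_dotProduct, col_apply, smul_eq_mul, hs]
      at hp hm
    constructor
    · linear_combination (-Complex.I / 4) * (hp - hm) + A i j * Complex.I_mul_I
    · linear_combination (hp + hm) / 2 - A j j * Complex.I_mul_I
  ext i j
  by_cases hij : i = j
  · subst hij
    by_cases hik : i = k
    · simp [hik]
    · simp [(key i k hik).2]
  · simp [hij, (key i j hij).1]

/-- The vector `eᵢ + s eⱼ` with `s ^ 2 = -1` lies on a line of the quadric `∑ xₘ ^ 2 = 0`
in `ℙ³`. -/
theorem exists_isotropic_plane_mem (i j : Fin 4) (hij : i ≠ j) (s : ℂ) (hs : s * s = -1) :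
    ∃ W : Submodule ℂ (Fin 4 → ℂ), Module.finrank ℂ W = 2 ∧ (∀ y ∈ W, y ⬝ᵥ y = 0) ∧
      Pi.single i 1 + s • Pi.single j 1 ∈ W := by
  obtain ⟨k, l, hik, hil, hjk, hjl, hkl⟩ :
      ∃ k l : Fin 4, i ≠ k ∧ i ≠ l ∧ j ≠ k ∧ j ≠ l ∧ k ≠ l := by
    revert i j; decide
  set u : Fin 4 → ℂ := Pi.single i 1 + s • Pi.single j 1 with hu
  set v : Fin 4 → ℂ := Pi.single k 1 + s • Pi.single l 1 with hv
  have hli : LinearIndependent ℂ ![u, v] := by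
    refine LinearIndependent.pair_iff.2 fun a b hab ↦ ⟨?_, ?_⟩
    · simpa [hu, hv, hij, hik, hil] using congrFun hab i
    · simpa [hu, hv, hik.symm, hjk.symm, hkl] using congrFun hab k
  refine ⟨Submodule.span ℂ {u, v}, ?_, fun y hy ↦ ?_, Submodule.subset_span (by simp)⟩
  · have hcard := finrank_span_eq_card hli
    rwa [Matrix.range_cons_cons_empty, Fintype.card_fin] at hcard
  · obtain ⟨a, b, rfl⟩ := Submodule.mem_span_pair.1 hy
    have huu : u ⬝ᵥ u = 0 := by
      simp [hu, hij, hij.symm, hs]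
    have hvv : v ⬝ᵥ v = 0 := by
      simp [hv, hkl, hkl.symm, hs]
    have huv : u ⬝ᵥ v = 0 := by
      simp [hu, hv, hik, hil, hjk, hjl]
    simp [huu, hvv, huv, dotProduct_comm v u]

/-- A smooth quadric surface is determined, up to a nonzero scalar, by the
family of lines contained in it: if two invertible symmetric `4 × 4` complex
matrices have the same `2`-dimensional totally isotropic subspaces, they agree
up to a nonzero scalar. -/
theorem eq_smul_of_same_rulings (Q Q' : Matrix (Fin 4) (Fin 4) ℂ)
    (hQ : Q.IsSymm) (hQ' : Q'.IsSymm)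
    (hQu : IsUnit Q.det) (hQ'u : IsUnit Q'.det)
    (h : ∀ W : Submodule ℂ (Fin 4 → ℂ), Module.finrank ℂ W = 2 →
      ((∀ y ∈ W, y ⬝ᵥ (Q *ᵥ y) = 0) ↔ (∀ y ∈ W, y ⬝ᵥ (Q' *ᵥ y) = 0))) :
    ∃ c : ℂ, c ≠ 0 ∧ Q' = c • Q := by
  obtain ⟨P, hP⟩ := hQ.exists_transpose_mul_mul_eq_one hQu
  have hPu : IsUnit P := IsUnit.of_mul_eq_one_right _ hP
  have hscalar := (hQ'.transpose_mul_mul_self P).eq_smul_one_of_isotropic 0 fun i j hij s hs ↦ by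
    obtain ⟨W, hW, hiso, hmem⟩ := exists_isotropic_plane_mem i j hij s hs
    have hdim : Module.finrank ℂ (W.map P.mulVecLin) = 2 := by
      rw [← hW]
      exact (Submodule.equivMapOfInjective _ (mulVec_injective_of_isUnit hPu) W).finrank_eq.symm
    rw [← mulVec_dotProduct_mulVec_mulVec]
    refine (h _ hdim).1 ?_ _ (Submodule.mem_map_of_mem (f := P.mulVecLin) hmem)
    rintro _ ⟨w, hw, rfl⟩
    rw [mulVecLin_apply, mulVec_dotProduct_mulVec_mulVec, hP, one_mulVec]
    exact hiso w hw
  set c := (Pᵀ * Q' * P) 0 0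
  have hQ'c : Q' = c • Q := by
    have hPt : IsUnit Pᵀ := (isUnit_transpose P).2 hPu
    apply hPt.mul_left_cancel
    apply hPu.mul_right_cancel
    rw [hscalar, Matrix.mul_smul, Matrix.smul_mul, hP]
  refine ⟨c, fun hc ↦ ?_, hQ'c⟩
  rw [hQ'c, hc] at hQ'u
  simp at hQ'u
end
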